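/- Let H be a Hopf algebra over a field k, let e ∈ H be an idempotent (e² = e), and let A be the smallest right coideal subalgebra of H containing e. Then e is central in A (i.e. e·a = a·e for all a ∈ A) if and only if e·e_{(1)} ⊗ e_{(2)} = e_{(1)}·e ⊗ e_{(2)} in H ⊗ H, i.e. (e ⊗ 1)·Δ(e) = Δ(e)·(e ⊗ 1). -/

import Mathlib

open TensorProduct

/-! A right coideal `V` lies in the kernel of a linear map `f` if and only if `(f ⊗ id) ∘ Δ`
vanishes on `V`: one direction applies `id ⊗ ε`. By coassociativity and flatness the kernel of
`(f ⊗ id) ∘ Δ` is itself a right coideal, hence the largest one on which `f` vanishes. Taking for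
`f` the commutator with `x`, this kernel is `{a | (x ⊗ 1) Δ(a) = Δ(a) (x ⊗ 1)}`, which is also a
subalgebra. So `x` commutes with the right coideal subalgebra generated by a set if and only if
`x ⊗ 1` commutes with `Δ(y)` for all generators `y`. -/

section Coalgebra

open Coalgebra LinearMap

theorem rTensor_lTensor_comm_apply {R M N P Q : Type*} [CommSemiring R] [AddCommMonoid M]
    [AddCommMonoid N] [AddCommMonoid P] [AddCommMonoid Q] [Module R M] [Module R N] [Module R P]
    [Module R Q] (f : M →ₗ[R] P) (g : N →ₗ[R] Q) (z : M ⊗[R] N) :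
    f.rTensor Q (g.lTensor M z) = g.lTensor P (f.rTensor N z) := by
  rw [← comp_apply, ← comp_apply, rTensor_comp_lTensor, lTensor_comp_rTensor]

variable {R C : Type*} [CommSemiring R] [AddCommMonoid C] [Module R C] [Coalgebra R C]

/-- A submodule `V` of a coalgebra `C` is a right coideal if `Δ(V) ⊆ V ⊗ C`. Since `V ⊗ C` need
not embed into `C ⊗ C` over a general base, it is replaced by its image there, given as a span. -/
def IsRightCoideal (V : Submodule R C) : Prop :=
  ∀ a ∈ V, comul (R := R) a ∈ Submodule.span R {x : C ⊗[R] C | ∃ b ∈ V, ∃ c : C, x = b ⊗ₜ[R] c}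

theorem isRightCoideal_iff_comul_mem_range {V : Submodule R C} :
    IsRightCoideal V ↔ ∀ a ∈ V, comul (R := R) a ∈ (V.subtype.rTensor C).range := by
  simp only [IsRightCoideal, rTensor, TensorProduct.range_map_eq_span_tmul, Subtype.exists,
    Submodule.subtype_apply, id_apply, exists_prop, eq_comm]

variable {N : Type*} [AddCommMonoid N] [Module R N]

/-- The kernel of `(f ⊗ id) ∘ Δ`, for a linear map `f` on a coalgebra. Over a ring, if the
coalgebra is flat, this is the largest right coideal contained in the kernel of `f`. -/
def rightCoidealCore (f : C →ₗ[R] N) : Submodule R C :=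
  (f.rTensor C ∘ₗ comul).ker

theorem mem_rightCoidealCore {f : C →ₗ[R] N} {a : C} :
    a ∈ rightCoidealCore f ↔ f.rTensor C (comul a) = 0 :=
  Iff.rfl

theorem rightCoidealCore_le_ker (f : C →ₗ[R] N) : rightCoidealCore f ≤ f.ker := by
  intro a ha
  have h : f a ⊗ₜ[R] (1 : R) = 0 := calc
    f a ⊗ₜ[R] (1 : R) = f.rTensor R (counit.lTensor C (comul a)) := by
      rw [lTensor_counit_comul, rTensor_tmul]
    _ = counit.lTensor N (f.rTensor C (comul a)) := rTensor_lTensor_comm_apply ..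
    _ = 0 := by rw [mem_rightCoidealCore.1 ha, map_zero]
  simpa using congrArg (TensorProduct.rid R N) h

theorem IsRightCoideal.le_rightCoidealCore_iff {V : Submodule R C} (hV : IsRightCoideal V)
    {f : C →ₗ[R] N} : V ≤ rightCoidealCore f ↔ V ≤ f.ker := by
  refine ⟨fun h ↦ h.trans (rightCoidealCore_le_ker f), fun h a ha ↦ ?_⟩
  obtain ⟨y, hy⟩ := isRightCoideal_iff_comul_mem_range.1 hV a ha
  have hf : f ∘ₗ V.subtype = 0 := LinearMap.ext fun v ↦ h v.2
  rw [mem_rightCoidealCore, ← hy, ← rTensor_comp_apply, hf, rTensor_zero, LinearMap.zero_apply]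

theorem assoc_rTensor_rTensor_comul (f : C →ₗ[R] N) (a : C) :
    TensorProduct.assoc R N C C ((f.rTensor C ∘ₗ comul).rTensor C (comul a)) =
      comul.lTensor N (f.rTensor C (comul a)) := calc
  _ = f.rTensor (C ⊗[R] C) (TensorProduct.assoc R C C C (comul.rTensor C (comul a))) := by
    simp [rTensor_tensor, rTensor_comp_apply]
  _ = f.rTensor (C ⊗[R] C) (comul.lTensor C (comul a)) := by rw [coassoc_apply]
  _ = comul.lTensor N (f.rTensor C (comul a)) := rTensor_lTensor_comm_apply ..

theorem isRightCoideal_rightCoidealCore {R C N : Type*} [CommRing R] [AddCommGroup C] [Module R C]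
    [Coalgebra R C] [Module.Flat R C] [AddCommGroup N] [Module R N] (f : C →ₗ[R] N) :
    IsRightCoideal (rightCoidealCore f) := by
  rw [isRightCoideal_iff_comul_mem_range]
  intro a ha
  have h_exact := Module.Flat.rTensor_exact C (exact_subtype_ker_map (f.rTensor C ∘ₗ comul))
  refine (h_exact _).1 ((TensorProduct.assoc R N C C).injective ?_)
  rw [assoc_rTensor_rTensor_comul, mem_rightCoidealCore.1 ha, map_zero, map_zero]

end Coalgebra

section Commutator

open LinearMap

variable {R A : Type*} [CommRing R] [Ring A] [Algebra R A]

theorem mulLeft_sub_mulRight_apply_eq_zero_iff {x a : A} :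
    (mulLeft R x - mulRight R x) a = 0 ↔ Commute x a :=
  sub_eq_zero

theorem rTensor_mulLeft_sub_mulRight (B : Type*) [Ring B] [Algebra R B] (x : A) :
    (mulLeft R x - mulRight R x).rTensor B =
      mulLeft R (x ⊗ₜ[R] (1 : B)) - mulRight R (x ⊗ₜ[R] (1 : B)) :=
  TensorProduct.ext' fun a b ↦ by simp

end Commutator

section Bialgebra

open Coalgebra LinearMap

variable {R H : Type*} [CommRing R] [Ring H] [Bialgebra R H]

variable (R) in
/-- The subalgebra `{a | (x ⊗ 1) Δ(a) = Δ(a) (x ⊗ 1)}` of a bialgebra. If the bialgebra is flat,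
this is the largest right coideal subalgebra whose elements commute with `x`. -/
def comulCentralizer (x : H) : Subalgebra R H :=
  (Subalgebra.centralizer R {x ⊗ₜ[R] (1 : H)}).comap (Bialgebra.comulAlgHom R H)

theorem mem_comulCentralizer {x a : H} :
    a ∈ comulCentralizer R x ↔ Commute (x ⊗ₜ[R] (1 : H)) (comul a) := by
  simp [comulCentralizer, Subalgebra.mem_centralizer_iff, commute_iff_eq]

theorem toSubmodule_comulCentralizer (x : H) :
    (comulCentralizer R x).toSubmodule = rightCoidealCore (mulLeft R x - mulRight R x) := by
  ext a
  rw [Subalgebra.mem_toSubmodule, mem_comulCentralizer, mem_rightCoidealCore,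
    rTensor_mulLeft_sub_mulRight, mulLeft_sub_mulRight_apply_eq_zero_iff]

theorem isRightCoideal_comulCentralizer [Module.Flat R H] (x : H) :
    IsRightCoideal (comulCentralizer R x).toSubmodule := by
  rw [toSubmodule_comulCentralizer]
  exact isRightCoideal_rightCoidealCore _

theorem IsRightCoideal.le_comulCentralizer_iff {A : Subalgebra R H}
    (hA : IsRightCoideal A.toSubmodule) {x : H} :
    A ≤ comulCentralizer R x ↔ ∀ a ∈ A, Commute x a := by
  rw [← Subalgebra.toSubmodule.le_iff_le, toSubmodule_comulCentralizer, hA.le_rightCoidealCore_iff]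
  simp only [SetLike.le_def, Subalgebra.mem_toSubmodule, mem_ker,
    mulLeft_sub_mulRight_apply_eq_zero_iff]

theorem stmt4_general [Module.Flat R H] {s : Set H} {A : Subalgebra R H}
    (hA : IsLeast {B : Subalgebra R H | IsRightCoideal B.toSubmodule ∧ s ⊆ B} A) (x : H) :
    (∀ a ∈ A, Commute x a) ↔ ∀ y ∈ s, Commute (x ⊗ₜ[R] (1 : H)) (comul y) := calc
  (∀ a ∈ A, Commute x a) ↔ A ≤ comulCentralizer R x := hA.1.1.le_comulCentralizer_iff.symm
  _ ↔ s ⊆ comulCentralizer R x :=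
    ⟨hA.1.2.trans, fun hs ↦ hA.2 ⟨isRightCoideal_comulCentralizer x, hs⟩⟩
  _ ↔ ∀ y ∈ s, Commute (x ⊗ₜ[R] (1 : H)) (comul y) := by
    simp only [Set.subset_def, SetLike.mem_coe, mem_comulCentralizer]

end Bialgebra

/-- let `e` be an idempotent of a Hopf algebra `H` and `A` the smallest right
coideal subalgebra of `H` containing `e`. Then `e` is central in `A` if and only if
`(e ⊗ 1)·Δ(e) = Δ(e)·(e ⊗ 1)`. -/
theorem stmt4 (k H : Type*) [Field k] [Ring H] [HopfAlgebra k H]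
    (e : H) (he : e * e = e)
    (A : Subalgebra k H)
    (hA : ∀ a ∈ A, Coalgebra.comul (R := k) a ∈
      Submodule.span k {x : H ⊗[k] H | ∃ b ∈ A, ∃ h : H, x = b ⊗ₜ[k] h})
    (heA : e ∈ A)
    (hmin : ∀ A' : Subalgebra k H,
      (∀ a ∈ A', Coalgebra.comul (R := k) a ∈
        Submodule.span k {x : H ⊗[k] H | ∃ b ∈ A', ∃ h : H, x = b ⊗ₜ[k] h}) →
      e ∈ A' → A ≤ A') :
    (∀ a ∈ A, e * a = a * e) ↔
      (e ⊗ₜ[k] (1 : H)) * Coalgebra.comul (R := k) e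
        = Coalgebra.comul (R := k) e * (e ⊗ₜ[k] (1 : H)) := by
  simpa [commute_iff_eq] using stmt4_general (s := {e})
    ⟨⟨hA, Set.singleton_subset_iff.2 heA⟩, fun B hB ↦ hmin B hB.1 (hB.2 rfl)⟩ e
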